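/- arXiv:1911.07993 — 2 statements merged into one kernel-verified Lean document; each statement's English description precedes it below -/
import Mathlib

section
/- Let $\varepsilon > 0$ and $b > 0$. There exist $n_0 \in \mathbb{N}$ and $c > 0$ such that for all $n > n_0$: if $\phi : \ell_1^m \to \ell_\infty^n$ is a linear map with operator norm $\|\phi\| \le 1$, and if the image $\phi(B_1(\ell_1^m))$ of the closed unit ball contains more than $2^{bn}$ points that are pairwise $\varepsilon$-separated in the $\ell_\infty$ norm, then $m \ge 2^{cn}$. -/
open scoped ENNReal

/-!
The image of the `ℓ¹` ball is the convex hull of `N = O(m)` points of the cube `[-1, 1]ⁿ`.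
By Maurey's empirical method each point of the image lies within Euclidean distance `√(n / k)` of
an average of `k` of these points, and there are only `N ^ k` such averages.
Around a fixed average, rounding to the grid `ε ℤⁿ` separates the given points and produces integer
vectors of `ℓ¹` norm at most `4n / (kε²)`. Weighting `g` by `t ^ ‖g‖₁` shows that there are at most
`β ^ n` of these, where `β > 1` is as close to `1` as we like once `k` is large. Hence
`2 ^ (bn) ≤ N ^ k * β ^ n` with `k` independent of `n`, which makes `N` exponential in `n`.
-/

open Finset Filter Topology
open scoped RealInnerProductSpace Pointwise

section

variable {ι : Type*} [Fintype ι]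

lemma card_mul_le_pow_of_le_prod {α : Type*} {w : α → ℝ} {a σ : ℝ} (hw : ∀ x, 0 ≤ w x)
    (hσ : HasSum w σ) (G : Finset (ι → α)) (hG : ∀ g ∈ G, a ≤ ∏ i, w (g i)) :
    #G * a ≤ σ ^ Fintype.card ι := by
  classical
  let T : Finset α := G.biUnion fun g => univ.image g
  have hGT : G ⊆ Fintype.piFinset fun _ => T := fun _ hg =>
    Fintype.mem_piFinset.2 fun i => mem_biUnion.2 ⟨_, hg, mem_image_of_mem _ (mem_univ i)⟩
  calc #G * a = ∑ _g ∈ G, a := by rw [sum_const, nsmul_eq_mul]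
    _ ≤ ∑ g ∈ G, ∏ i, w (g i) := sum_le_sum hG
    _ ≤ ∑ g ∈ Fintype.piFinset fun _ => T, ∏ i, w (g i) :=
        sum_le_sum_of_subset_of_nonneg hGT fun g _ _ => prod_nonneg fun i _ => hw (g i)
    _ = (∑ x ∈ T, w x) ^ Fintype.card ι := by
        rw [sum_prod_piFinset T fun _ => w, prod_const, card_univ]
    _ ≤ σ ^ Fintype.card ι :=
        pow_le_pow_left₀ (sum_nonneg fun x _ => hw x) (sum_le_hasSum T (fun x _ => hw x) hσ) _

lemma hasSum_pow_natAbs {t : ℝ} (ht₀ : 0 ≤ t) (ht₁ : t < 1) :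
    HasSum (fun z : ℤ => t ^ z.natAbs) ((1 + t) / (1 - t)) := by
  have hgeom := hasSum_geometric_of_lt_one ht₀ ht₁
  have hneg : HasSum (fun n : ℕ => t ^ (-((n : ℤ) + 1)).natAbs) (t * (1 - t)⁻¹) := by
    simpa only [Int.natAbs_neg, ← Nat.cast_succ, Int.natAbs_natCast, Nat.succ_eq_add_one, pow_succ']
      using hgeom.mul_left t
  have hval : (1 + t) / (1 - t) = (1 - t)⁻¹ + t * (1 - t)⁻¹ := by ring
  rw [hval]
  exact .of_nat_of_neg_add_one hgeom hneg

lemma card_mul_rpow_le_of_sum_abs_le {t A : ℝ} (ht₀ : 0 < t) (ht₁ : t < 1) (G : Finset (ι → ℤ))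
    (hG : ∀ g ∈ G, ∑ i, |(g i : ℝ)| ≤ A) :
    #G * t ^ A ≤ ((1 + t) / (1 - t)) ^ Fintype.card ι := by
  refine card_mul_le_pow_of_le_prod (fun z => pow_nonneg ht₀.le _) (hasSum_pow_natAbs ht₀.le ht₁) G
    fun g hg => ?_
  calc t ^ A ≤ t ^ ∑ i, |(g i : ℝ)| := Real.rpow_le_rpow_of_exponent_ge ht₀ ht₁.le (hG g hg)
    _ = ∏ i, t ^ (g i).natAbs := by
        rw [Real.rpow_sum_of_pos ht₀]
        refine prod_congr rfl fun i _ => ?_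
        rw [← Int.cast_abs, Int.abs_eq_natAbs, Int.cast_natCast, Real.rpow_natCast]

lemma abs_round_le_four_mul_sq {R : Type*} [Field R] [LinearOrder R] [IsStrictOrderedRing R]
    [FloorRing R] (y : R) : |(round y : R)| ≤ 4 * y ^ 2 := by
  rcases eq_or_ne (round y) 0 with h | h
  · simp only [h, Int.cast_zero, abs_zero]
    positivity
  · have hround : (1 : R) ≤ |(round y : R)| := by exact_mod_cast Int.one_le_abs h
    have hy : |(round y : R)| - 1 / 2 ≤ |y| := by
      have := abs_sub_abs_le_abs_sub (round y : R) y
      linarith [abs_sub_comm y (round y), abs_sub_round y]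
    rw [← sq_abs y]
    nlinarith

lemma abs_sub_le_of_round_div_eq {R : Type*} [Field R] [LinearOrder R] [IsStrictOrderedRing R]
    [FloorRing R] {ε x y : R} (hε : 0 < ε) (h : round (x / ε) = round (y / ε)) :
    |x - y| ≤ ε := by
  have hdiv : |x / ε - y / ε| ≤ 1 := by
    have hx := abs_le.1 (abs_sub_round (x / ε))
    have hy := abs_le.1 (abs_sub_round (y / ε))
    rw [h] at hx
    rw [abs_le]
    constructor <;> linarith
  rwa [← sub_div, abs_div, abs_of_pos hε, div_le_one hε] at hdiv

lemma card_mul_rpow_le_of_separated_of_sum_sq_le {ε t ρ : ℝ} (hε : 0 < ε) (ht₀ : 0 < t)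
    (ht₁ : t < 1) {S : Finset (ι → ℝ)}
    (hsep : (S : Set (ι → ℝ)).Pairwise fun x y => ε < dist x y) (c : ι → ℝ)
    (hS : ∀ x ∈ S, ∑ i, (x i - c i) ^ 2 ≤ ρ) :
    #S * t ^ (4 * ρ / ε ^ 2) ≤ ((1 + t) / (1 - t)) ^ Fintype.card ι := by
  classical
  let g : (ι → ℝ) → ι → ℤ := fun x i => round ((x i - c i) / ε)
  have hg_inj : Set.InjOn g S := by
    refine fun x hx y hy hxy => hsep.eq hx hy (not_lt.2 ?_)
    refine (dist_pi_le_iff hε.le).2 fun i => ?_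
    simpa only [Real.dist_eq, sub_sub_sub_cancel_right] using
      abs_sub_le_of_round_div_eq hε (congrFun hxy i)
  have hg_sum : ∀ x ∈ S, ∑ i, |(g x i : ℝ)| ≤ 4 * ρ / ε ^ 2 := fun x hx =>
    calc ∑ i, |(g x i : ℝ)| ≤ ∑ i, 4 * ((x i - c i) / ε) ^ 2 :=
          sum_le_sum fun i _ => abs_round_le_four_mul_sq _
      _ = 4 * (∑ i, (x i - c i) ^ 2) / ε ^ 2 := by
          simp only [div_pow, mul_sum, sum_div, mul_div_assoc]
      _ ≤ 4 * ρ / ε ^ 2 := by gcongr; exact hS x hx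
  rw [← card_image_of_injOn hg_inj]
  exact card_mul_rpow_le_of_sum_abs_le ht₀ ht₁ _ (forall_mem_image.2 hg_sum)

/-- Greedy form of Maurey's empirical method: if `w` is the current error, the affine functional
`v ↦ ⟪w - x, v - x⟫` vanishes at `x`, hence is nonpositive at some `v ∈ s`, and adding this `v` to
the partial sum increases the squared error by at most `‖v‖ ^ 2 - ‖x‖ ^ 2`. -/
theorem exists_norm_sum_sub_smul_sq_le {E : Type*} [NormedAddCommGroup E] [InnerProductSpace ℝ E]
    {s : Set E} {x : E} {r : ℝ} (hs : ∀ v ∈ s, ‖v‖ ≤ r) (hx : x ∈ convexHull ℝ s) (k : ℕ) :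
    ∃ u : Fin k → E, (∀ l, u l ∈ s) ∧ ‖∑ l, u l - (k : ℝ) • x‖ ^ 2 ≤ k * r ^ 2 := by
  induction k with
  | zero => exact ⟨Fin.elim0, fun l => l.elim0, by simp⟩
  | succ k ih =>
    obtain ⟨u, hus, hu⟩ := ih
    set w : E := ∑ l, u l - (k : ℝ) • x
    obtain ⟨v, hv, hvx⟩ : ∃ v ∈ s, ⟪w - x, v⟫ ≤ ⟪w - x, x⟫ :=
      ((innerₛₗ ℝ (w - x)).concaveOn convex_univ).exists_le_of_mem_convexHull
        (Set.subset_univ s) hx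
    refine ⟨Fin.cons v u, Fin.cases hv hus, ?_⟩
    have hsum : ∑ l, (Fin.cons v u : Fin (k + 1) → E) l - ((k + 1 : ℕ) : ℝ) • x = w + (v - x) := by
      rw [Fin.sum_univ_succ]
      simp only [Fin.cons_zero, Fin.cons_succ, Nat.cast_succ, add_smul, one_smul, w]
      abel
    have hexpand : ‖w + (v - x)‖ ^ 2
        = ‖w‖ ^ 2 + 2 * (⟪w - x, v⟫ - ⟪w - x, x⟫) + ‖v‖ ^ 2 - ‖x‖ ^ 2 := by
      simp only [← real_inner_self_eq_norm_sq, inner_add_left, inner_add_right, inner_sub_left,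
        inner_sub_right, real_inner_comm w v, real_inner_comm w x, real_inner_comm x v]
      ring
    have hvr : ‖v‖ ^ 2 ≤ r ^ 2 := pow_le_pow_left₀ (norm_nonneg v) (hs v hv) 2
    rw [hsum, hexpand, Nat.cast_succ]
    linarith [sq_nonneg ‖x‖]

lemma exists_sum_sub_average_sq_le {s : Set (ι → ℝ)} {x : ι → ℝ} (hs : ∀ v ∈ s, ‖v‖ ≤ 1)
    (hx : x ∈ convexHull ℝ s) {k : ℕ} (hk : 0 < k) :
    ∃ u : Fin k → ι → ℝ, (∀ l, u l ∈ s) ∧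
      ∑ i, (x i - (∑ l, u l i) / k) ^ 2 ≤ Fintype.card ι / k := by
  let e := (WithLp.linearEquiv 2 ℝ (ι → ℝ)).symm.toLinearMap
  have hnorm : ∀ v ∈ e '' s, ‖v‖ ≤ √(Fintype.card ι) := by
    rintro _ ⟨v, hv, rfl⟩
    rw [EuclideanSpace.norm_eq]
    refine Real.sqrt_le_sqrt ?_
    calc ∑ i, ‖v i‖ ^ 2 ≤ ∑ _i : ι, (1 : ℝ) :=
          sum_le_sum fun i _ => pow_le_one₀ (norm_nonneg _) ((norm_le_pi_norm v i).trans (hs v hv))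
      _ = Fintype.card ι := by simp
  have hex : e x ∈ convexHull ℝ (e '' s) := by
    rw [← e.image_convexHull]
    exact Set.mem_image_of_mem e hx
  obtain ⟨u, hus, hu⟩ := exists_norm_sum_sub_smul_sq_le hnorm hex k
  choose u' hu's hu' using hus
  refine ⟨u', hu's, ?_⟩
  have hk' : (0 : ℝ) < k := Nat.cast_pos.2 hk
  have hterm : ∀ i, (x i - (∑ l, u' l i) / k) ^ 2 = (∑ l, u' l i - k * x i) ^ 2 / k ^ 2 := by
    intro i
    field_simp
    ring
  have hsum : ∑ i, (∑ l, u' l i - k * x i) ^ 2 ≤ k * Fintype.card ι := by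
    rw [Real.sq_sqrt (Nat.cast_nonneg _), EuclideanSpace.real_norm_sq_eq] at hu
    simpa [← hu', e] using hu
  rw [sum_congr rfl fun i _ => hterm i, ← sum_div, div_le_div_iff₀ (by positivity) hk']
  nlinarith

lemma card_mul_rpow_le_of_separated_of_subset_convexHull {ε t : ℝ} (hε : 0 < ε) (ht₀ : 0 < t)
    (ht₁ : t < 1) {k : ℕ} (hk : 0 < k) {V S : Finset (ι → ℝ)}
    (hV : ∀ v ∈ V, ‖v‖ ≤ 1) (hSV : (S : Set (ι → ℝ)) ⊆ convexHull ℝ (V : Set (ι → ℝ)))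
    (hsep : (S : Set (ι → ℝ)).Pairwise fun x y => ε < dist x y) :
    #S * t ^ (4 * (Fintype.card ι / k) / ε ^ 2)
      ≤ #V ^ k * ((1 + t) / (1 - t)) ^ Fintype.card ι := by
  classical
  have hexists : ∀ x : ι → ℝ, ∃ u : Fin k → ι → ℝ, x ∈ S → (∀ l, u l ∈ V) ∧
      ∑ i, (x i - (∑ l, u l i) / k) ^ 2 ≤ Fintype.card ι / k := by
    intro x
    by_cases hx : x ∈ S
    · obtain ⟨u, hu⟩ := exists_sum_sub_average_sq_le hV (hSV hx) hk
      exact ⟨u, fun _ => hu⟩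
    · exact ⟨0, fun h => absurd h hx⟩
  choose u hu using hexists
  have hmaps : (S : Set (ι → ℝ)).MapsTo u (Fintype.piFinset fun _ : Fin k => V) := fun x hx =>
    Fintype.mem_piFinset.2 (hu x hx).1
  have hfiber : ∀ q : Fin k → ι → ℝ, #{x ∈ S | u x = q} * t ^ (4 * (Fintype.card ι / k) / ε ^ 2)
      ≤ ((1 + t) / (1 - t)) ^ Fintype.card ι := by
    refine fun q => card_mul_rpow_le_of_separated_of_sum_sq_le hε ht₀ ht₁
      (hsep.mono (coe_subset.2 (filter_subset _ S))) (fun i => (∑ l, q l i) / k) fun x hx => ?_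
    obtain ⟨hxS, rfl⟩ := mem_filter.1 hx
    exact (hu x hxS).2
  rw [card_eq_sum_card_fiberwise hmaps, Nat.cast_sum, sum_mul]
  refine (sum_le_card_nsmul _ _ _ fun q _ => hfiber q).trans_eq ?_
  simp

end

lemma exists_one_add_div_one_sub_eq_and_inv_le_rpow {β : ℝ} (hβ : 1 < β) (C : ℝ) :
    ∃ (t : ℝ) (k : ℕ), 0 < t ∧ t < 1 ∧ 0 < k ∧ (1 + t) / (1 - t) = β ∧ β⁻¹ ≤ t ^ (C / k) := by
  have ht₀ : 0 < (β - 1) / (β + 1) := div_pos (by linarith) (by linarith)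
  have ht₁ : (β - 1) / (β + 1) < 1 := (div_lt_one (by linarith)).2 (by linarith)
  have htendsto : Tendsto (fun k : ℕ => ((β - 1) / (β + 1)) ^ (C / k)) atTop (𝓝 1) := by
    simpa only [Real.rpow_zero] using
      tendsto_const_nhds.rpow (tendsto_const_div_atTop_nhds_zero_nat C) (Or.inl ht₀.ne')
  obtain ⟨k, hk, hk₀⟩ :=
    ((htendsto.eventually_const_le (inv_lt_one_of_one_lt₀ hβ)).and (eventually_gt_atTop 0)).exists
  refine ⟨_, k, ht₀, ht₁, hk₀, ?_, hk⟩
  have : β + 1 ≠ 0 := by linarith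
  field_simp
  ring

theorem exists_card_le_of_separated_of_subset_convexHull {ε β : ℝ} (hε : 0 < ε) (hβ : 1 < β) :
    ∃ k : ℕ, 0 < k ∧ ∀ {ι : Type*} [Fintype ι] {V S : Finset (ι → ℝ)},
      (∀ v ∈ V, ‖v‖ ≤ 1) → (S : Set (ι → ℝ)) ⊆ convexHull ℝ (V : Set (ι → ℝ)) →
      (S : Set (ι → ℝ)).Pairwise (fun x y => ε < dist x y) →
      (#S : ℝ) ≤ #V ^ k * β ^ Fintype.card ι := by
  have hβ_sqrt : 1 < √β := Real.lt_sqrt_of_sq_lt (by simpa using hβ)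
  obtain ⟨t, k, ht₀, ht₁, hk, htβ, hβt⟩ :=
    exists_one_add_div_one_sub_eq_and_inv_le_rpow hβ_sqrt (4 / ε ^ 2)
  refine ⟨k, hk, fun {ι _ V S} hV hSV hsep => ?_⟩
  set n := Fintype.card ι
  have hbound := card_mul_rpow_le_of_separated_of_subset_convexHull hε ht₀ ht₁ hk hV hSV hsep
  rw [htβ] at hbound
  have hpow : (√β ^ n)⁻¹ ≤ t ^ (4 * (n / k) / ε ^ 2) := by
    rw [show 4 * ((n : ℝ) / k) / ε ^ 2 = 4 / ε ^ 2 / k * n by ring, Real.rpow_mul ht₀.le,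
      Real.rpow_natCast, ← inv_pow]
    exact pow_le_pow_left₀ (by positivity) hβt n
  have hsqrt : 0 < √β ^ n := by positivity
  calc (#S : ℝ) = #S * (√β ^ n)⁻¹ * √β ^ n := by field_simp
    _ ≤ #S * t ^ (4 * (n / k) / ε ^ 2) * √β ^ n := by gcongr
    _ ≤ #V ^ k * √β ^ n * √β ^ n := by gcongr
    _ = #V ^ k * β ^ n := by rw [mul_assoc, ← mul_pow, Real.mul_self_sqrt (by linarith)]

lemma sum_smul_mem_of_sum_abs_le_one {κ E : Type*} [Fintype κ] [AddCommGroup E] [Module ℝ E]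
    {K : Set E} (hK : AbsConvex ℝ K) (h₀ : 0 ∈ K) {a : κ → E} (ha : ∀ j, a j ∈ K) {s : κ → ℝ}
    (hs : ∑ j, |s j| ≤ 1) : ∑ j, s j • a j ∈ K := by
  let w : Option κ → ℝ := fun o => o.elim (1 - ∑ j, |s j|) fun j => |s j|
  let z : Option κ → E := fun o => o.elim 0 fun j => (SignType.sign (s j) : ℝ) • a j
  have hw : ∀ o ∈ univ, 0 ≤ w o := by
    rintro (_ | j) -
    exacts [sub_nonneg.2 hs, abs_nonneg (s j)]
  have hz : ∀ o ∈ univ, z o ∈ K := by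
    rintro (_ | j) -
    · exact h₀
    · refine hK.1.smul_mem ?_ (ha j)
      cases SignType.sign (s j) <;> simp
  have hw_sum : ∑ o, w o = 1 := by simp [w, Fintype.sum_option]
  simpa [w, z, Fintype.sum_option, smul_smul] using hK.2.sum_mem hw hw_sum hz

lemma exists_finset_image_closedBall_subset_convexHull {κ F : Type*} [Fintype κ]
    [NormedAddCommGroup F] [NormedSpace ℝ F] (f : PiLp 1 (fun _ : κ => ℝ) →L[ℝ] F) :
    ∃ V : Finset F, #V ≤ 2 * (Fintype.card κ + 1) ∧ (∀ v ∈ V, ‖v‖ ≤ ‖f‖) ∧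
      f '' Metric.closedBall 0 1 ⊆ convexHull ℝ (V : Set F) := by
  classical
  let a : κ → F := fun j => f (PiLp.single 1 j 1)
  let A : Finset F := insert 0 (univ.image a)
  have hA_card : #A ≤ Fintype.card κ + 1 :=
    (card_insert_le _ _).trans (Nat.succ_le_succ card_image_le)
  have hA_norm : ∀ v ∈ A, ‖v‖ ≤ ‖f‖ := by
    refine (forall_mem_insert _ _ _).2 ⟨by simp, forall_mem_image.2 fun j _ => ?_⟩
    simpa using f.le_opNorm (PiLp.single 1 j 1)
  refine ⟨A ∪ -A, ?_, fun v hv => ?_, ?_⟩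
  · have := card_union_le A (-A)
    rw [card_neg] at this
    omega
  · rcases mem_union.1 hv with hv | hv
    · exact hA_norm v hv
    · rw [← norm_neg]
      exact hA_norm (-v) (mem_neg'.1 hv)
  · rintro _ ⟨s, hs, rfl⟩
    have hsum : f s = ∑ j, s j • a j := by
      have hs_basis : s = ∑ j, s j • (PiLp.single 1 j 1 : PiLp 1 fun _ : κ => ℝ) := by
        ext i
        simp [Pi.single_apply]
      conv_lhs => rw [hs_basis]
      simp only [map_sum, map_smul, a]
    rw [mem_closedBall_zero_iff, PiLp.norm_eq_of_L1] at hs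
    rw [coe_union, coe_neg, convexHull_union_neg_eq_absConvexHull, hsum]
    refine sum_smul_mem_of_sum_abs_le_one absConvex_absConvexHull
      (subset_absConvexHull (by simp [A])) (fun j => subset_absConvexHull (by simp [A])) ?_
    simpa only [Real.norm_eq_abs] using hs

theorem exists_card_le_of_separated_of_subset_image_closedBall {ε β : ℝ} (hε : 0 < ε)
    (hβ : 1 < β) :
    ∃ k : ℕ, 0 < k ∧ ∀ {κ ι : Type*} [Fintype κ] [Fintype ι]
      (φ : PiLp 1 (fun _ : κ => ℝ) →L[ℝ] PiLp ∞ fun _ : ι => ℝ), ‖φ‖ ≤ 1 →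
      ∀ S : Finset (PiLp ∞ fun _ : ι => ℝ),
        (S : Set (PiLp ∞ fun _ : ι => ℝ)) ⊆ φ '' Metric.closedBall 0 1 →
        (∀ x ∈ S, ∀ y ∈ S, x ≠ y → ε < dist x y) →
        (#S : ℝ) ≤ (2 * (Fintype.card κ + 1)) ^ k * β ^ Fintype.card ι := by
  obtain ⟨k, hk, hbound⟩ := exists_card_le_of_separated_of_subset_convexHull hε hβ
  refine ⟨k, hk, fun {κ ι _ _} φ hφ S hSφ hsep => ?_⟩
  let e : PiLp ∞ (fun _ : ι => ℝ) ≃ₗᵢ[ℝ] (ι → ℝ) := PiLp.equivₗᵢ _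
  obtain ⟨V, hV_card, hV, hφV⟩ := exists_finset_image_closedBall_subset_convexHull
    (e.toLinearIsometry.toContinuousLinearMap ∘L φ)
  rw [LinearIsometry.norm_toContinuousLinearMap_comp] at hV
  let T : Finset (ι → ℝ) := S.map e.toEquiv.toEmbedding
  have hT : (T : Set (ι → ℝ)) = e '' S := coe_map _ _
  have hTV : (T : Set (ι → ℝ)) ⊆ convexHull ℝ V := by
    rw [hT]
    refine (Set.image_mono hSφ).trans ?_
    rwa [Set.image_image]
  have hTsep : (T : Set (ι → ℝ)).Pairwise fun x y => ε < dist x y := by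
    rw [hT]
    rintro _ ⟨x, hx, rfl⟩ _ ⟨y, hy, rfl⟩ hxy
    exact (hsep x hx y hy (ne_of_apply_ne e hxy)).trans_eq (e.dist_map x y).symm
  have hcard := hbound (fun v hv => (hV v hv).trans hφ) hTV hTsep
  rw [card_map] at hcard
  refine hcard.trans ?_
  gcongr
  exact_mod_cast hV_card

lemma two_rpow_le_of_two_rpow_lt {b : ℝ} {k n m : ℕ} (hk : 0 < k) (hn : 8 * k ≤ b * n)
    (h : (2 : ℝ) ^ (b * n) < (2 * (m + 1)) ^ k * (2 ^ (b / 2)) ^ n) :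
    (2 : ℝ) ^ (b / (4 * k) * n) ≤ m := by
  set X : ℝ := 2 ^ (b / (4 * k) * n) with hX
  have hX_pow : (X ^ 2) ^ k * (2 ^ (b / 2)) ^ n = (2 : ℝ) ^ (b * n) := by
    rw [hX]
    simp only [← Real.rpow_natCast, ← Real.rpow_mul zero_le_two, ← Real.rpow_add zero_lt_two]
    congr 1
    push_cast
    field_simp
    ring
  have hX_sq : X ^ 2 < 2 * (m + 1) := by
    rw [← hX_pow] at h
    exact lt_of_pow_lt_pow_left₀ k (by positivity) (lt_of_mul_lt_mul_right h (by positivity))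
  have hX_four : 4 ≤ X := by
    have hexp : 2 ≤ b / (4 * k) * n := by
      rw [div_mul_eq_mul_div, le_div_iff₀ (by positivity)]
      linarith
    calc (4 : ℝ) = 2 ^ (2 : ℝ) := by norm_num
      _ ≤ X := Real.rpow_le_rpow_of_exponent_le one_le_two hexp
  nlinarith

theorem glasner_weiss_lemma (ε b : ℝ) (hε : 0 < ε) (hb : 0 < b) :
    ∃ (n₀ : ℕ) (c : ℝ), 0 < c ∧
      ∀ n, n > n₀ → ∀ m : ℕ,
        ∀ φ : (PiLp 1 fun _ : Fin m => ℝ) →L[ℝ] (PiLp ⊤ fun _ : Fin n => ℝ),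
          ‖φ‖ ≤ 1 →
          ∀ S : Finset (PiLp ⊤ fun _ : Fin n => ℝ),
            (↑S : Set (PiLp ⊤ fun _ : Fin n => ℝ)) ⊆ φ '' Metric.closedBall 0 1 →
            (∀ x ∈ S, ∀ y ∈ S, x ≠ y → ε < dist x y) →
            (2 : ℝ) ^ (b * n) < (S.card : ℝ) →
            (2 : ℝ) ^ (c * n) ≤ (m : ℝ) := by
  obtain ⟨k, hk, hcard_le⟩ := exists_card_le_of_separated_of_subset_image_closedBall hε
    (Real.one_lt_rpow one_lt_two (half_pos hb))
  obtain ⟨n₀, hn₀⟩ := exists_nat_ge (8 * k / b)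
  refine ⟨n₀, b / (4 * k), by positivity, fun n hn m φ hφ S hSφ hsep hcard => ?_⟩
  have hn_large : 8 * k ≤ b * n := by
    rw [div_le_iff₀' hb] at hn₀
    exact hn₀.trans (by gcongr)
  refine two_rpow_le_of_two_rpow_lt hk hn_large (hcard.trans_le ?_)
  simpa only [Fintype.card_fin] using hcard_le φ hφ S hSφ hsep
end

section
/- Let $(X,\{f_n\})$ be a NADS. If $h_{top}(\mathcal{M}(X), \{f_n^*\}) > 0$, then $h_{top}(X, \{f_n\}) > 0$. Equivalently, $h_{top}(X,\{f_n\}) = 0$ implies $h_{top}(\mathcal{M}(X),\{f_n^*\}) = 0$. -/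
open Filter MeasureTheory

noncomputable section

def compSeq {X : Type*} (f : ℕ → X → X) : ℕ → X → X
  | 0 => id
  | n + 1 => f n ∘ compSeq f n

/-- `E` is an `(n, ε)`-separated set for the nonautonomous system `(X, f)`
with respect to the distance function `d`. -/
def IsSeparatedSet {X : Type*} (d : X → X → ℝ) (f : ℕ → X → X) (n : ℕ) (ε : ℝ)
    (E : Set X) : Prop :=
  ∀ x ∈ E, ∀ y ∈ E, x ≠ y → ∃ j < n, ε < d (compSeq f j x) (compSeq f j y)

/-- `F` is an `(n, ε)`-spanning set for the nonautonomous system `(X, f)`. -/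
def IsSpanningSet {X : Type*} (d : X → X → ℝ) (f : ℕ → X → X) (n : ℕ) (ε : ℝ)
    (F : Set X) : Prop :=
  ∀ x : X, ∃ y ∈ F, ∀ j < n, d (compSeq f j x) (compSeq f j y) < ε

/-- maximal cardinality of an `(n, ε)`-separated set. -/
def sepNum {X : Type*} (d : X → X → ℝ) (f : ℕ → X → X) (n : ℕ) (ε : ℝ) : ℕ :=
  sSup {c | ∃ E : Finset X, IsSeparatedSet d f n ε ↑E ∧ E.card = c}

/-- minimal cardinality of an `(n, ε)`-spanning set. -/
def spanNum {X : Type*} (d : X → X → ℝ) (f : ℕ → X → X) (n : ℕ) (ε : ℝ) : ℕ :=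
  sInf {c | ∃ F : Finset X, IsSpanningSet d f n ε ↑F ∧ F.card = c}

/-- Topological entropy of a nonautonomous dynamical system, via separated sets. -/
def nadsEntropy {X : Type*} (d : X → X → ℝ) (f : ℕ → X → X) : EReal :=
  ⨆ (ε : ℝ) (_ : 0 < ε),
    atTop.limsup fun n : ℕ => ((Real.log (sepNum d f n ε) / n : ℝ) : EReal)

end

open scoped ENNReal

/-!
A finite family `G` of test functions controls the distance on measures up to `ε`, so an
`(n, ε)`-separated set of measures is separated by the vectors `(∫ g ∘ f₁ʲ dμ)`, `g ∈ G`, `j < n`.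
By the weak law of large numbers in its `L²` form, each such vector is approximated, outside a
proportion `O(1 / k)` of its coordinates, by the averages over `k` points of a fixed
`(n, r)`-spanning set of `X`. There are at most `sepNum ^ k` choices of these points, and the
exceptional coordinates, rounded to a finite net, form a sparse word; the number of sparse words
grows at an exponential rate that vanishes as `k → ∞`. Since `k` does not depend on `n`, zero
entropy on `X` forces zero entropy on the measures.
-/

open ProbabilityTheory
open scoped BoundedContinuousFunction Finset Topology Uniformity

section Combinatorics

variable {ι κ τ α β : Type*} [Fintype ι]

theorem sum_exp_neg_mul_card_ne_none [DecidableEq ι] [Fintype τ] (s : ℝ) :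
    ∑ w : ι → Option τ, Real.exp (-(s * #{i | w i ≠ none})) =
      (1 + Fintype.card τ * Real.exp (-s)) ^ Fintype.card ι := by
  have weight (w : ι → Option τ) : Real.exp (-(s * #{i | w i ≠ none})) =
      ∏ i, if w i = none then 1 else Real.exp (-s) := by
    rw [Finset.prod_ite, Finset.prod_const_one, one_mul, Finset.prod_const, ← Real.exp_nat_mul,
      mul_neg, mul_comm]
  calc ∑ w : ι → Option τ, Real.exp (-(s * #{i | w i ≠ none}))
      = ∏ _i : ι, ∑ o : Option τ, if o = none then 1 else Real.exp (-s) := by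
        simp only [weight, Fintype.prod_sum]
    _ = (1 + Fintype.card τ * Real.exp (-s)) ^ Fintype.card ι := by
        simp [Fintype.sum_option]

theorem card_le_exp_of_card_ne_none_le [Fintype τ] {W : Finset (ι → Option τ)} {B s : ℝ}
    (hs : 0 ≤ s) (hW : ∀ w ∈ W, (#{i | w i ≠ none} : ℝ) ≤ B) :
    (W.card : ℝ) ≤ Real.exp (B * s + Fintype.card ι * (Fintype.card τ * Real.exp (-s))) := by
  classical
  -- Chernoff's method: each word is weighed by `exp (-s)` per nonempty letter.
  have weighted : W.card * Real.exp (-(s * B)) ≤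
      Real.exp (Fintype.card ι * (Fintype.card τ * Real.exp (-s))) := calc
    W.card * Real.exp (-(s * B)) = ∑ _w ∈ W, Real.exp (-(s * B)) := by
      rw [Finset.sum_const, nsmul_eq_mul]
    _ ≤ ∑ w ∈ W, Real.exp (-(s * #{i | w i ≠ none})) := by
      gcongr with w hw
      exact hW w hw
    _ ≤ ∑ w : ι → Option τ, Real.exp (-(s * #{i | w i ≠ none})) :=
      Finset.sum_le_univ_sum_of_nonneg fun _ => by positivity
    _ = (Fintype.card τ * Real.exp (-s) + 1) ^ Fintype.card ι := by
      rw [sum_exp_neg_mul_card_ne_none, add_comm]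
    _ ≤ Real.exp (Fintype.card τ * Real.exp (-s)) ^ Fintype.card ι := by
      gcongr
      exact Real.add_one_le_exp _
    _ = Real.exp (Fintype.card ι * (Fintype.card τ * Real.exp (-s))) := (Real.exp_nat_mul _ _).symm
  rw [Real.exp_neg, ← div_eq_mul_inv, div_le_iff₀ (Real.exp_pos _), ← Real.exp_add] at weighted
  rwa [add_comm, mul_comm B]

theorem card_le_of_approx_off_sparse [PseudoMetricSpace α] [Fintype κ] {δ B s : ℝ} (hs : 0 ≤ s)
    {M : Finset β} {v : β → ι → α} {c : κ → ι → α} {T : Finset α}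
    (hsep : ∀ μ ∈ M, ∀ ν ∈ M, μ ≠ ν → ∃ i, 2 * δ < dist (v μ i) (v ν i))
    (hc : ∀ μ ∈ M, ∃ y, (#{i | δ < dist (v μ i) (c y i)} : ℝ) ≤ B)
    (hT : ∀ μ ∈ M, ∀ i, ∃ a ∈ T, dist (v μ i) a ≤ δ) :
    (M.card : ℝ) ≤
      Fintype.card κ * Real.exp (B * s + Fintype.card ι * (T.card * Real.exp (-s))) := by
  classical
  choose y hy using fun μ : M => hc μ μ.2
  choose a haT ha using fun μ : M => hT μ μ.2
  -- The word of `μ` records the rounded coordinates at which its center is a bad approximation.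
  let word (μ : M) (i : ι) : Option T :=
    if δ < dist (v μ i) (c (y μ) i) then some ⟨a μ i, haT μ i⟩ else none
  have word_eq_none (μ : M) (i : ι) : word μ i = none ↔ dist (v μ i) (c (y μ) i) ≤ δ := by
    simp [word]
  have word_ne_none (μ : M) (i : ι) : word μ i ≠ none ↔ δ < dist (v μ i) (c (y μ) i) :=
    (word_eq_none μ i).not.trans not_le
  have code_injective : Function.Injective fun μ : M => (y μ, word μ) := by
    intro μ ν hμν
    obtain ⟨hy_eq, hword_eq⟩ := Prod.mk.inj hμν
    by_contra hne
    obtain ⟨i, hi⟩ := hsep μ μ.2 ν ν.2 (Subtype.coe_ne_coe.mpr hne)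
    suffices ∃ b, dist (v μ i) b ≤ δ ∧ dist (v ν i) b ≤ δ by
      obtain ⟨b, hμb, hνb⟩ := this
      linarith [dist_triangle_right (v μ i) (v ν i) b]
    by_cases hbad : word μ i = none
    · refine ⟨c (y μ) i, (word_eq_none μ i).mp hbad, ?_⟩
      rw [hy_eq]
      exact (word_eq_none ν i).mp (congrFun hword_eq i ▸ hbad)
    · have hμ := (word_ne_none μ i).mp hbad
      have hν := (word_ne_none ν i).mp (congrFun hword_eq i ▸ hbad)
      have ha_eq : a μ i = a ν i := by simpa [word, hμ, hν] using congrFun hword_eq i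
      exact ⟨a μ i, ha μ i, ha_eq ▸ ha ν i⟩
  have card_words : ((Finset.univ.image word).card : ℝ) ≤
      Real.exp (B * s + Fintype.card ι * (T.card * Real.exp (-s))) := by
    rw [← Fintype.card_coe T]
    refine card_le_exp_of_card_ne_none_le hs fun w hw => ?_
    obtain ⟨μ, -, rfl⟩ := Finset.mem_image.mp hw
    simpa only [word_ne_none] using hy μ
  have card_codes : M.card ≤ Fintype.card κ * (Finset.univ.image word).card := by
    rw [← Fintype.card_coe M, ← Finset.card_univ (α := M), ← Finset.card_univ (α := κ),
      ← Finset.card_product]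
    exact Finset.card_le_card_of_injOn _ (by simp [Set.MapsTo]) code_injective.injOn
  calc (M.card : ℝ) ≤ Fintype.card κ * (Finset.univ.image word).card := by exact_mod_cast card_codes
    _ ≤ _ := by gcongr

end Combinatorics

section Empirical

variable {ι X : Type*} [Fintype ι] [MeasurableSpace X]

theorem integral_sq_sum_sub_eq_card_mul_variance {μ : Measure X} [IsProbabilityMeasure μ]
    {h : X → ℝ} (hh : MemLp h 2 μ) (k : ℕ) :
    ∫ x : Fin k → X, (∑ a, h (x a) - k * μ[h]) ^ 2 ∂(Measure.pi fun _ => μ) = k * Var[h; μ] := by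
  have mem (a : Fin k) : MemLp (fun x : Fin k → X => h (x a)) 2 (Measure.pi fun _ => μ) :=
    hh.comp_measurePreserving (measurePreserving_eval _ a)
  have mean : ∫ x : Fin k → X, ∑ a, h (x a) ∂(Measure.pi fun _ => μ) = k * μ[h] := by
    rw [integral_finsetSum _ fun a _ => (mem a).integrable one_le_two]
    simp [integral_comp_eval (μ := fun _ : Fin k => μ) hh.aestronglyMeasurable]
  calc _ = Var[fun x : Fin k → X => ∑ a, h (x a); Measure.pi fun _ => μ] := by
        rw [variance_eq_integral (memLp_finsetSum _ fun a _ => mem a).aemeasurable, mean]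
    _ = k * Var[h; μ] := by
        simpa [Finset.sum_fn] using variance_sum_pi (μ := fun _ : Fin k => μ) fun _ => hh

theorem exists_sum_sq_sum_sub_le {μ : Measure X} [IsProbabilityMeasure μ] {h : ι → X → ℝ}
    (hh : ∀ i, MemLp (h i) 2 μ) (k : ℕ) :
    ∃ x : Fin k → X, ∑ i, (∑ a, h i (x a) - k * μ[h i]) ^ 2 ≤ k * ∑ i, Var[h i; μ] := by
  have int (i : ι) : Integrable (fun x : Fin k → X => (∑ a, h i (x a) - k * μ[h i]) ^ 2)
      (Measure.pi fun _ => μ) :=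
    ((memLp_finsetSum _ fun a _ => (hh i).comp_measurePreserving
      (measurePreserving_eval (fun _ => μ) a)).sub (memLp_const _)).integrable_sq
  obtain ⟨x, hx⟩ := exists_le_integral (integrable_finsetSum Finset.univ fun i _ => int i)
  refine ⟨x, hx.trans_eq ?_⟩
  rw [integral_finsetSum _ fun i _ => int i, Finset.mul_sum]
  exact Finset.sum_congr rfl fun i _ => integral_sq_sum_sub_eq_card_mul_variance (hh i) k

theorem exists_card_lt_abs_average_sub_le {μ : Measure X} [IsProbabilityMeasure μ]
    {h : ι → X → ℝ} (hh : ∀ i, MemLp (h i) 2 μ) {k : ℕ} (hk : k ≠ 0) {δ : ℝ} (hδ : 0 < δ) :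
    ∃ x : Fin k → X, (#{i | δ < |(∑ a, h i (x a)) / k - μ[h i]|} : ℝ) ≤
      (∑ i, Var[h i; μ]) / (k * δ ^ 2) := by
  obtain ⟨x, hx⟩ := exists_sum_sq_sum_sub_le hh k
  have hk' : (0 : ℝ) < k := by positivity
  have sq_le (i : ι) (hi : δ < |(∑ a, h i (x a)) / k - μ[h i]|) :
      (k * δ) ^ 2 ≤ (∑ a, h i (x a) - k * μ[h i]) ^ 2 := by
    have scale : ∑ a, h i (x a) - k * μ[h i] = k * ((∑ a, h i (x a)) / k - μ[h i]) := by
      field_simp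
    rw [scale, mul_pow, mul_pow]
    gcongr 1
    exact sq_le_sq.mpr (by rw [abs_of_pos hδ]; exact hi.le)
  refine ⟨x, ?_⟩
  rw [le_div_iff₀ (by positivity)]
  set bad := Finset.univ.filter fun i => δ < |(∑ a, h i (x a)) / k - μ[h i]|
  have chebyshev : bad.card * (k * δ) ^ 2 ≤ k * ∑ i, Var[h i; μ] := calc
    bad.card * (k * δ) ^ 2 = ∑ _i ∈ bad, (k * δ) ^ 2 := by rw [Finset.sum_const, nsmul_eq_mul]
    _ ≤ ∑ i ∈ bad, (∑ a, h i (x a) - k * μ[h i]) ^ 2 :=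
      Finset.sum_le_sum fun i hi => sq_le i (Finset.mem_filter.mp hi).2
    _ ≤ ∑ i, (∑ a, h i (x a) - k * μ[h i]) ^ 2 :=
      Finset.sum_le_univ_sum_of_nonneg fun _ => sq_nonneg _
    _ ≤ k * ∑ i, Var[h i; μ] := hx
  refine le_of_mul_le_mul_left ?_ hk'
  linarith

theorem exists_card_lt_abs_average_net_sub_le {μ : Measure X} [IsProbabilityMeasure μ]
    {h : ι → X → ℝ} (hh : ∀ i, MemLp (h i) 2 μ) {δ : ℝ} (hδ : 0 < δ) {F : Set X}
    (hF : ∀ x, ∃ y ∈ F, ∀ i, |h i x - h i y| ≤ δ) {k : ℕ} (hk : k ≠ 0) :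
    ∃ y : Fin k → F, (#{i | 2 * δ < |(∑ a, h i (y a)) / k - μ[h i]|} : ℝ) ≤
      (∑ i, Var[h i; μ]) / (k * δ ^ 2) := by
  obtain ⟨x, hx⟩ := exists_card_lt_abs_average_sub_le hh hk hδ
  choose p hpF hp using hF
  have hk' : (0 : ℝ) < k := by positivity
  have average_sub_le (i : ι) : |(∑ a, h i (p (x a))) / k - (∑ a, h i (x a)) / k| ≤ δ := by
    rw [← sub_div, ← Finset.sum_sub_distrib, abs_div, Nat.abs_cast, div_le_iff₀ hk']
    calc |∑ a, (h i (p (x a)) - h i (x a))| ≤ ∑ a, |h i (p (x a)) - h i (x a)| :=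
          Finset.abs_sum_le_sum_abs _ _
      _ ≤ ∑ _a : Fin k, δ := by
          gcongr with a
          rw [abs_sub_comm]
          exact hp (x a) i
      _ = δ * k := by simp [mul_comm]
  refine ⟨fun a => ⟨p (x a), hpF _⟩, le_trans ?_ hx⟩
  refine Nat.cast_le.mpr (Finset.card_le_card <| Finset.monotone_filter_right _ fun i _ hi => ?_)
  linarith [average_sub_le i,
    abs_sub_le ((∑ a, h i (p (x a))) / k) ((∑ a, h i (x a)) / k) (μ[h i])]

theorem card_le_of_separated_integrals {h : ι → X → ℝ} (hh : ∀ i, Measurable (h i)) {C : ℝ}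
    (hC : ∀ i x, |h i x| ≤ C) {δ : ℝ} (hδ : 0 < δ) {F : Finset X}
    (hF : ∀ x, ∃ y ∈ F, ∀ i, |h i x - h i y| ≤ δ) {T : Finset ℝ}
    (hT : ∀ c ∈ Set.Icc (-C) C, ∃ a ∈ T, |c - a| ≤ 2 * δ) {k : ℕ} (hk : k ≠ 0) {s : ℝ} (hs : 0 ≤ s)
    {M : Finset (ProbabilityMeasure X)}
    (hM : ∀ μ ∈ M, ∀ ν ∈ M, μ ≠ ν → ∃ i, 4 * δ < |∫ x, h i x ∂μ - ∫ x, h i x ∂ν|) :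
    (M.card : ℝ) ≤ F.card ^ k * Real.exp (Fintype.card ι * C ^ 2 / (k * δ ^ 2) * s +
      Fintype.card ι * (T.card * Real.exp (-s))) := by
  have mem (μ : ProbabilityMeasure X) (i : ι) : MemLp (h i) 2 (μ : Measure X) :=
    .of_bound (hh i).aestronglyMeasurable C (.of_forall (hC i))
  have variance_le (μ : ProbabilityMeasure X) (i : ι) : Var[h i; μ] ≤ C ^ 2 := by
    have := variance_le_sq_of_bounded (μ := (μ : Measure X))
      (.of_forall fun x => abs_le.mp (hC i x)) (hh i).aemeasurable
    linarith
  have sum_variance_le (μ : ProbabilityMeasure X) : ∑ i, Var[h i; μ] ≤ Fintype.card ι * C ^ 2 := by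
    rw [← nsmul_eq_mul]
    exact Finset.sum_le_card_nsmul _ _ _ fun i _ => variance_le μ i
  have integral_mem (μ : ProbabilityMeasure X) (i : ι) : ∫ x, h i x ∂μ ∈ Set.Icc (-C) C := by
    have := norm_integral_le_of_norm_le_const (μ := (μ : Measure X)) (f := h i)
      (.of_forall (hC i))
    rw [probReal_univ, mul_one] at this
    exact abs_le.mp this
  have card_le := card_le_of_approx_off_sparse (κ := Fin k → F) (δ := 2 * δ)
    (B := Fintype.card ι * C ^ 2 / (k * δ ^ 2)) (M := M) (v := fun μ i => ∫ x, h i x ∂μ)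
    (c := fun y i => (∑ a, h i (y a)) / k) (T := T) hs
    (fun μ hμ ν hν hne => by
      obtain ⟨i, hi⟩ := hM μ hμ ν hν hne
      exact ⟨i, by rw [Real.dist_eq]; linarith⟩)
    (fun μ _ => by
      obtain ⟨y, hy⟩ := exists_card_lt_abs_average_net_sub_le (mem μ) hδ (F := F) hF hk
      refine ⟨y, ?_⟩
      simp only [Real.dist_eq, abs_sub_comm (∫ x, h _ x ∂μ)]
      exact hy.trans (by gcongr; exact sum_variance_le μ))
    (fun μ _ i => hT _ (integral_mem μ i))
  simpa using card_le

end Empirical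

section Separated

variable {X : Type*}

theorem isSeparatedSet_empty (d : X → X → ℝ) (f : ℕ → X → X) (n : ℕ) (ε : ℝ) :
    IsSeparatedSet d f n ε ∅ :=
  fun _ hx => hx.elim

theorem sepNum_le {d : X → X → ℝ} {f : ℕ → X → X} {n : ℕ} {ε B : ℝ}
    (h : ∀ E : Finset X, IsSeparatedSet d f n ε E → (E.card : ℝ) ≤ B) :
    (sepNum d f n ε : ℝ) ≤ B := by
  have hB : 0 ≤ B := by simpa using h ∅ (by simpa using isSeparatedSet_empty d f n ε)
  refine (Nat.le_floor_iff hB).mp (csSup_le ⟨0, ∅, ?_, rfl⟩ ?_)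
  · simpa using isSeparatedSet_empty d f n ε
  · rintro _ ⟨E, hE, rfl⟩
    exact Nat.le_floor (h E hE)

theorem continuous_compSeq [TopologicalSpace X] {f : ℕ → X → X} (hf : ∀ n, Continuous (f n)) :
    ∀ j, Continuous (compSeq f j)
  | 0 => continuous_id
  | j + 1 => (hf j).comp (continuous_compSeq hf j)

theorem measurable_compSeq [MeasurableSpace X] {f : ℕ → X → X} (hf : ∀ n, Measurable (f n)) :
    ∀ j, Measurable (compSeq f j)
  | 0 => measurable_id
  | j + 1 => (hf j).comp (measurable_compSeq hf j)

variable [PseudoMetricSpace X] {f : ℕ → X → X}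

theorem IsSeparatedSet.card_le_of_isSpanningSet {n : ℕ} {ε : ℝ} {E F : Finset X}
    (hE : IsSeparatedSet dist f n ε E) (hF : IsSpanningSet dist f n (ε / 2) F) :
    E.card ≤ F.card := by
  choose p hpF hp using hF
  refine Finset.card_le_card_of_injOn p (fun x _ => hpF x) fun x hx y hy hxy => ?_
  by_contra hne
  obtain ⟨j, hj, hlt⟩ := hE x hx y hy hne
  have hx := hp x j hj
  rw [hxy] at hx
  linarith [hp y j hj,
    dist_triangle_right (compSeq f j x) (compSeq f j y) (compSeq f j (p y))]

theorem exists_isSpanningSet [CompactSpace X] (hf : ∀ n, Continuous (f n)) (n : ℕ) {ε : ℝ}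
    (hε : 0 < ε) : ∃ F : Finset X, IsSpanningSet dist f n ε F := by
  obtain ⟨F, hF⟩ := isCompact_univ.elim_finite_subcover
    (fun y => ⋂ j ∈ Finset.range n, {x | dist (compSeq f j x) (compSeq f j y) < ε})
    (fun y => isOpen_biInter_finset fun j _ =>
      isOpen_lt ((continuous_compSeq hf j).dist continuous_const) continuous_const)
    (fun x _ => Set.mem_iUnion.mpr ⟨x, by simp [hε]⟩)
  exact ⟨F, fun x => by simpa using hF (Set.mem_univ x)⟩

theorem exists_isSeparatedSet_card_eq_sepNum [CompactSpace X] (hf : ∀ n, Continuous (f n)) (n : ℕ)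
    {ε : ℝ} (hε : 0 < ε) :
    ∃ E : Finset X, IsSeparatedSet dist f n ε E ∧ E.card = sepNum dist f n ε ∧
      ∀ E' : Finset X, IsSeparatedSet dist f n ε E' → E'.card ≤ E.card := by
  obtain ⟨F, hF⟩ := exists_isSpanningSet hf n (half_pos hε)
  have bdd : BddAbove {c | ∃ E : Finset X, IsSeparatedSet dist f n ε E ∧ E.card = c} := by
    refine ⟨F.card, ?_⟩
    rintro _ ⟨E, hE, rfl⟩
    exact hE.card_le_of_isSpanningSet hF
  have nonempty : {c | ∃ E : Finset X, IsSeparatedSet dist f n ε E ∧ E.card = c}.Nonempty :=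
    ⟨0, ∅, by simpa using isSeparatedSet_empty dist f n ε, rfl⟩
  obtain ⟨E, hE, hcard⟩ := Nat.sSup_mem nonempty bdd
  exact ⟨E, hE, hcard, fun E' hE' => hcard ▸ le_csSup bdd ⟨E', hE', rfl⟩⟩

theorem exists_isSpanningSet_card_le_sepNum [CompactSpace X] (hf : ∀ n, Continuous (f n)) (n : ℕ)
    {ε δ : ℝ} (hε : 0 < ε) (hεδ : ε < δ) :
    ∃ F : Finset X, IsSpanningSet dist f n δ F ∧ F.card ≤ sepNum dist f n ε := by
  classical
  obtain ⟨E, hE, hcard, hmax⟩ := exists_isSeparatedSet_card_eq_sepNum hf n hε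
  refine ⟨E, fun x => ?_, hcard.le⟩
  by_contra! hfar
  have hfar' (y : X) (hy : y ∈ E) : ∃ j < n, ε < dist (compSeq f j x) (compSeq f j y) :=
    (hfar y hy).imp fun j hj => ⟨hj.1, hεδ.trans_le hj.2⟩
  have hxE : x ∉ E := fun hx => by
    obtain ⟨j, -, hj⟩ := hfar' x hx
    exact absurd (dist_self (compSeq f j x)) (hε.trans hj).ne'
  have hinsert : IsSeparatedSet dist f n ε (insert x E : Finset X) := by
    intro a ha b hb hab
    rw [Finset.mem_coe, Finset.mem_insert] at ha hb
    rcases ha with rfl | ha <;> rcases hb with rfl | hb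
    · exact absurd rfl hab
    · exact hfar' b hb
    · simpa only [dist_comm] using hfar' a ha
    · exact hE a ha b hb hab
  have := hmax _ hinsert
  rw [Finset.card_insert_of_notMem hxE] at this
  omega

end Separated

section Entropy

variable {X : Type*} (d : X → X → ℝ) (f : ℕ → X → X)

theorem nadsEntropy_nonneg : 0 ≤ nadsEntropy d f := by
  refine le_iSup₂_of_le 1 one_pos (le_limsup_of_frequently_le (.of_forall fun n => ?_))
  exact EReal.coe_nonneg.mpr (div_nonneg (Real.log_natCast_nonneg _) n.cast_nonneg)

variable {d f}

theorem log_div_le_iff_le_exp {a n : ℕ} (hn : 0 < n) {c : ℝ} (hc : 0 ≤ c) :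
    Real.log a / n ≤ c ↔ (a : ℝ) ≤ Real.exp (c * n) := by
  rw [div_le_iff₀ (Nat.cast_pos.mpr hn)]
  rcases a.eq_zero_or_pos with rfl | ha
  · simp only [Nat.cast_zero, Real.log_zero, (Real.exp_pos _).le, iff_true]
    positivity
  · exact Real.log_le_iff_le_exp (Nat.cast_pos.mpr ha)

theorem nadsEntropy_nonpos_iff : nadsEntropy d f ≤ 0 ↔
    ∀ ε > 0, ∀ c > 0, ∀ᶠ n : ℕ in atTop, (sepNum d f n ε : ℝ) ≤ Real.exp (c * n) := by
  have eventually_iff (ε c : ℝ) (hc : 0 < c) :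
      (∀ᶠ n : ℕ in atTop, ((Real.log (sepNum d f n ε) / n : ℝ) : EReal) ≤ c) ↔
        ∀ᶠ n : ℕ in atTop, (sepNum d f n ε : ℝ) ≤ Real.exp (c * n) :=
    eventually_congr <| (eventually_gt_atTop 0).mono fun n hn => by
      rw [EReal.coe_le_coe_iff, log_div_le_iff_le_exp hn hc.le]
  refine iSup₂_le_iff.trans <| forall₂_congr fun ε _ => ⟨fun h c hc => ?_, fun h => ?_⟩
  · rw [← eventually_iff ε c hc]
    exact (eventually_lt_of_limsup_lt (h.trans_lt (EReal.coe_pos.mpr hc))).mono fun _ => le_of_lt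
  · refine le_of_forall_gt_imp_ge_of_dense fun a ha => ?_
    obtain ⟨c, hc, hca⟩ := EReal.lt_iff_exists_real_btwn.mp ha
    have hc := EReal.coe_pos.mp hc
    exact (limsup_le_of_le (h := (eventually_iff ε c hc).mpr (h c hc))).trans hca.le

end Entropy

section Measures

variable {X : Type*} [MeasurableSpace X]

/-- The maps `f_n^*` induced on probability measures by a sequence of measurable self-maps. -/
noncomputable abbrev pushforwardSeq (f : ℕ → X → X) (hf : ∀ n, Measurable (f n)) :
    ℕ → ProbabilityMeasure X → ProbabilityMeasure X :=
  fun n μ => μ.map (hf n).aemeasurable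

theorem toMeasure_compSeq_pushforwardSeq {f : ℕ → X → X} (hf : ∀ n, Measurable (f n))
    (μ : ProbabilityMeasure X) (j : ℕ) :
    (compSeq (pushforwardSeq f hf) j μ).toMeasure = (μ : Measure X).map (compSeq f j) := by
  induction j with
  | zero => exact Measure.map_id.symm
  | succ j ih =>
    calc (compSeq (pushforwardSeq f hf) (j + 1) μ).toMeasure
        = ((μ : Measure X).map (compSeq f j)).map (f j) := congrArg (Measure.map (f j)) ih
      _ = _ := Measure.map_map (hf j) (measurable_compSeq hf j)

theorem integral_compSeq_pushforwardSeq {f : ℕ → X → X} (hf : ∀ n, Measurable (f n))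
    (μ : ProbabilityMeasure X) (j : ℕ) {g : X → ℝ} (hg : Measurable g) :
    ∫ x, g x ∂(compSeq (pushforwardSeq f hf) j μ).toMeasure = ∫ x, g (compSeq f j x) ∂μ := by
  rw [toMeasure_compSeq_pushforwardSeq, integral_map (measurable_compSeq hf j).aemeasurable
    hg.aestronglyMeasurable]

theorem exists_lt_abs_integral_sub [TopologicalSpace X] [HasOuterApproxClosed X] [BorelSpace X]
    {μ ν : ProbabilityMeasure X} (hne : μ ≠ ν) (c : ℝ) :
    ∃ g : X →ᵇ ℝ, c < |∫ x, g x ∂μ - ∫ x, g x ∂ν| := by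
  obtain ⟨g, hg⟩ : ∃ g : X →ᵇ ℝ, ∫ x, g x ∂μ.toMeasure ≠ ∫ x, g x ∂ν.toMeasure := by
    by_contra! h
    have : μ.toMeasure = ν.toMeasure := ext_of_forall_integral_eq_of_IsFiniteMeasure h
    exact hne (Subtype.ext this)
  have hpos : 0 < |∫ x, g x ∂μ - ∫ x, g x ∂ν| := abs_sub_pos.mpr hg
  obtain ⟨n, hn⟩ := exists_nat_gt (c / |∫ x, g x ∂μ - ∫ x, g x ∂ν|)
  refine ⟨(n : ℝ) • g, ?_⟩
  simp only [BoundedContinuousFunction.coe_smul, smul_eq_mul, integral_const_mul, ← mul_sub,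
    abs_mul, Nat.abs_cast]
  exact (div_lt_iff₀ hpos).mp hn

theorem exists_finset_forall_integral_close_imp_le [TopologicalSpace X] [T2Space X]
    [CompactSpace X] [HasOuterApproxClosed X] [BorelSpace X]
    {d : ProbabilityMeasure X → ProbabilityMeasure X → ℝ}
    (hd : Continuous fun p : ProbabilityMeasure X × ProbabilityMeasure X => d p.1 p.2)
    (hd_self : ∀ μ, d μ μ = 0) {ε : ℝ} (hε : 0 < ε) (c : ℝ) :
    ∃ G : Finset (X →ᵇ ℝ), ∀ μ ν : ProbabilityMeasure X,
      (∀ g ∈ G, |∫ x, g x ∂μ - ∫ x, g x ∂ν| ≤ c) → d μ ν ≤ ε := by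
  have far_compact : IsCompact {p : ProbabilityMeasure X × ProbabilityMeasure X | ε ≤ d p.1 p.2} :=
    (isClosed_le continuous_const hd).isCompact
  obtain ⟨G, hG⟩ := far_compact.elim_finite_subcover
    (fun g : X →ᵇ ℝ => {p | c < |∫ x, g x ∂p.1 - ∫ x, g x ∂p.2|})
    (fun g => by
      have hg := ProbabilityMeasure.continuous_integral_boundedContinuousFunction g
      exact isOpen_lt continuous_const
        ((hg.comp continuous_fst).sub (hg.comp continuous_snd)).abs)
    (fun p (hp : ε ≤ d p.1 p.2) => by
      have hne : p.1 ≠ p.2 := fun h => by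
        rw [h, hd_self] at hp
        exact hp.not_gt hε
      exact Set.mem_iUnion.mpr (exists_lt_abs_integral_sub hne c))
  refine ⟨G, fun μ ν hclose => ?_⟩
  by_contra! hfar
  obtain ⟨g, hgG, hg⟩ := Set.mem_iUnion₂.mp (hG (show (μ, ν) ∈ {p | ε ≤ d p.1 p.2} from hfar.le))
  exact (hclose g hgG).not_gt hg

end Measures

theorem exists_pos_forall_dist_lt_imp_abs_sub_le {X : Type*} [PseudoMetricSpace X] [CompactSpace X]
    (G : Finset (X →ᵇ ℝ)) {δ : ℝ} (hδ : 0 < δ) :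
    ∃ r > 0, ∀ g ∈ G, ∀ x y, dist x y < r → |g x - g y| ≤ δ := by
  have close : ∀ᶠ p in 𝓤 X, ∀ g ∈ G, |g p.1 - g p.2| < δ :=
    (Filter.eventually_all_finset G).mpr fun g _ =>
      CompactSpace.uniformContinuous_of_continuous g.continuous (Metric.dist_mem_uniformity hδ)
  obtain ⟨r, hr, hclose⟩ := Metric.mem_uniformity_dist.mp close
  exact ⟨r, hr, fun g hg x y hxy => (hclose hxy g hg).le⟩

theorem exists_div_mul_add_mul_exp_neg_le (A B : ℝ) {c : ℝ} (hc : 0 < c) :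
    ∃ k : ℕ, k ≠ 0 ∧ ∃ s ≥ 0, A / k * s + B * Real.exp (-s) ≤ c := by
  have tendsto_s : Tendsto (fun s => B * Real.exp (-s)) atTop (𝓝 0) := by
    simpa using Real.tendsto_exp_neg_atTop_nhds_zero.const_mul B
  obtain ⟨s, hs, hBs⟩ := ((eventually_ge_atTop 0).and
    (tendsto_s.eventually_le_const (half_pos hc))).exists
  have tendsto_k : Tendsto (fun k : ℕ => A / k * s) atTop (𝓝 0) := by
    simpa using (tendsto_const_div_atTop_nhds_zero_nat A).mul_const s
  obtain ⟨k, hk, hAk⟩ := ((eventually_ne_atTop 0).and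
    (tendsto_k.eventually_le_const (half_pos hc))).exists
  exact ⟨k, hk, s, hs, by linarith⟩

theorem continuous_dist_of_toTopologicalSpace_eq {Y : Type*} [t : TopologicalSpace Y]
    {m : PseudoMetricSpace Y} (hm : m.toUniformSpace.toTopologicalSpace = t) :
    Continuous fun p : Y × Y => @dist _ m.toDist p.1 p.2 := by
  subst hm
  exact continuous_dist

section InducedEntropy

variable {X : Type*} [MeasurableSpace X] {f : ℕ → X → X}

theorem exists_card_le_of_separated_integral_compSeq [PseudoMetricSpace X] [CompactSpace X]
    [BorelSpace X] (hf : ∀ n, Continuous (f n)) (G : Finset (X →ᵇ ℝ)) {a : ℝ} (ha : 0 < a) {c : ℝ}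
    (hc : 0 < c) :
    ∃ k : ℕ, k ≠ 0 ∧ ∃ r > 0, ∀ (n : ℕ) (M : Finset (ProbabilityMeasure X)),
      (∀ μ ∈ M, ∀ ν ∈ M, μ ≠ ν → ∃ j < n, ∃ g ∈ G,
        a < |∫ x, g (compSeq f j x) ∂μ - ∫ x, g (compSeq f j x) ∂ν|) →
      (M.card : ℝ) ≤ sepNum dist f n r ^ k * Real.exp (c * n) := by
  classical
  obtain ⟨C, hC⟩ := (G.image (‖·‖)).exists_le
  have hδ : 0 < a / 4 := by positivity
  obtain ⟨T, -, hT⟩ := (isCompact_Icc (a := -C) (b := C)).elim_nhds_subcover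
    (Metric.ball · (2 * (a / 4))) fun t _ => Metric.ball_mem_nhds t (by positivity)
  obtain ⟨r, hr, hG⟩ := exists_pos_forall_dist_lt_imp_abs_sub_le G hδ
  obtain ⟨k, hk, s, hs, hks⟩ :=
    exists_div_mul_add_mul_exp_neg_le (G.card * C ^ 2 / (a / 4) ^ 2) (G.card * T.card) hc
  refine ⟨k, hk, r / 2, half_pos hr, fun n M hM => ?_⟩
  obtain ⟨F, hF, hF_card⟩ :=
    exists_isSpanningSet_card_le_sepNum hf n (half_pos hr) (half_lt_self hr)
  have card_le := card_le_of_separated_integrals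
    (h := fun (i : G × Fin n) x => i.1.1 (compSeq f i.2 x))
    (fun i => i.1.1.continuous.measurable.comp (continuous_compSeq hf _).measurable)
    (fun i x => (i.1.1.norm_coe_le_norm _).trans (hC _ (Finset.mem_image_of_mem _ i.1.2)))
    hδ (F := F)
    (fun x => (hF x).imp fun y hy => ⟨hy.1, fun i => hG _ i.1.2 _ _ (hy.2 _ i.2.2)⟩)
    (T := T)
    (fun t ht => by simpa only [Set.mem_iUnion₂, exists_prop] using
      (Set.mem_iUnion₂.mp (hT ht)).imp fun b hb => ⟨hb.1, (Metric.mem_ball.mp hb.2).le⟩)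
    hk hs (M := M)
    (fun μ hμ ν hν hne => by
      obtain ⟨j, hj, g, hg, hlt⟩ := hM μ hμ ν hν hne
      exact ⟨(⟨g, hg⟩, ⟨j, hj⟩), by rwa [mul_div_cancel₀ a four_ne_zero]⟩)
  refine card_le.trans ?_
  have rate_le := mul_le_mul_of_nonneg_right hks n.cast_nonneg
  simp only [Fintype.card_prod, Fintype.card_coe, Fintype.card_fin, Nat.cast_mul]
  gcongr
  calc _ = _ := by ring
    _ ≤ _ := rate_le

variable [MetricSpace X] [CompactSpace X] [BorelSpace X]
  {d : ProbabilityMeasure X → ProbabilityMeasure X → ℝ}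

theorem exists_sepNum_pushforwardSeq_le (hf : ∀ n, Continuous (f n))
    (hd : Continuous fun p : ProbabilityMeasure X × ProbabilityMeasure X => d p.1 p.2)
    (hd_self : ∀ μ, d μ μ = 0) {ε : ℝ} (hε : 0 < ε) {c : ℝ} (hc : 0 < c) :
    ∃ k : ℕ, k ≠ 0 ∧ ∃ r > 0, ∀ n,
      (sepNum d (pushforwardSeq f fun n => (hf n).measurable) n ε : ℝ) ≤
        sepNum dist f n r ^ k * Real.exp (c * n) := by
  obtain ⟨G, hG⟩ := exists_finset_forall_integral_close_imp_le hd hd_self hε 1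
  obtain ⟨k, hk, r, hr, hcard⟩ := exists_card_le_of_separated_integral_compSeq hf G one_pos hc
  refine ⟨k, hk, r, hr, fun n => sepNum_le fun M hM => hcard n M fun μ hμ ν hν hne => ?_⟩
  obtain ⟨j, hj, hlt⟩ := hM μ hμ ν hν hne
  refine ⟨j, hj, ?_⟩
  by_contra! hclose
  refine hlt.not_ge (hG _ _ fun g hg => ?_)
  simpa only [integral_compSeq_pushforwardSeq _ _ _ g.continuous.measurable] using hclose g hg

theorem nadsEntropy_pushforwardSeq_nonpos (hf : ∀ n, Continuous (f n))
    (hd : Continuous fun p : ProbabilityMeasure X × ProbabilityMeasure X => d p.1 p.2)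
    (hd_self : ∀ μ, d μ μ = 0) (h : nadsEntropy dist f ≤ 0) :
    nadsEntropy d (pushforwardSeq f fun n => (hf n).measurable) ≤ 0 := by
  refine nadsEntropy_nonpos_iff.mpr fun ε hε c hc => ?_
  obtain ⟨k, hk, r, hr, hle⟩ := exists_sepNum_pushforwardSeq_le hf hd hd_self hε (half_pos hc)
  filter_upwards [nadsEntropy_nonpos_iff.mp h r hr (c / (2 * k)) (by positivity)] with n hn
  calc (sepNum d (pushforwardSeq f fun n => (hf n).measurable) n ε : ℝ)
      ≤ sepNum dist f n r ^ k * Real.exp (c / 2 * n) := hle n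
    _ ≤ Real.exp (c / (2 * k) * n) ^ k * Real.exp (c / 2 * n) := by gcongr
    _ = Real.exp (c * n) := by
      rw [← Real.exp_nat_mul, ← Real.exp_add]
      congr 1
      field_simp
      ring

theorem pos_induced_entropy_pos_general (hf : ∀ n, Continuous (f n))
    (hd : Continuous fun p : ProbabilityMeasure X × ProbabilityMeasure X => d p.1 p.2)
    (hd_self : ∀ μ, d μ μ = 0) :
    (0 < nadsEntropy d (pushforwardSeq f fun n => (hf n).measurable) → 0 < nadsEntropy dist f) ∧
      (nadsEntropy dist f = 0 →
        nadsEntropy d (pushforwardSeq f fun n => (hf n).measurable) = 0) := by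
  have nonpos := nadsEntropy_pushforwardSeq_nonpos hf hd hd_self
  refine ⟨fun h => ?_, fun h => (nonpos h.le).antisymm (nadsEntropy_nonneg _ _)⟩
  by_contra! hX
  exact h.not_ge (nonpos hX)

end InducedEntropy

theorem pos_induced_entropy_pos {X : Type*} [MetricSpace X] [CompactSpace X]
    [MeasurableSpace X] [BorelSpace X]
    (f : ℕ → X → X) (hf : ∀ n, Continuous (f n))
    (m : MetricSpace (ProbabilityMeasure X))
    (hm : m.toUniformSpace.toTopologicalSpace =
      (inferInstance : TopologicalSpace (ProbabilityMeasure X))) :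
    (0 < nadsEntropy (fun μ ν : ProbabilityMeasure X => @dist _ m.toDist μ ν)
        (fun n μ => μ.map ((hf n).aemeasurable)) →
      0 < nadsEntropy (fun x y : X => dist x y) f) ∧
    (nadsEntropy (fun x y : X => dist x y) f = 0 →
      nadsEntropy (fun μ ν : ProbabilityMeasure X => @dist _ m.toDist μ ν)
        (fun n μ => μ.map ((hf n).aemeasurable)) = 0) :=
  pos_induced_entropy_pos_general hf (continuous_dist_of_toTopologicalSpace_eq hm)
    (@dist_self _ m.toPseudoMetricSpace)
end
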